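/- The rook partition monoid RP_n is generated, as a monoid, by the set {s̄_1,…,s̄_{n−1}} ∪ {ē_1,…,ē_n} ∪ {q̄_1,…,q̄_{n−1}} ∪ {ō_1,…,ō_n}. -/

import Mathlib

/-! Every rook partition is reduced to a permutation by splitting off generators on the left
or on the right.

If two upper points `i ≠ j` of `α` lie in one block, then `α = t̄_ij · α'`, where `α'` is `α`
with `i` turned into a singleton block (`tbar_mul_iso`); if `i` is a rook dot, then
`α = ō_i · α'` with the same `α'` (`obar_mul_iso`).  Repeating this makes all upper points
non-dots in distinct blocks, and by reflection (`gen_flip`) the same can be achieved in the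
lower row.  The blocks then are pairs `{i, j'}` and singletons, with as many upper as lower
singletons.  If `{i}` and `{j'}` are singletons, then `α = ē_i · α'`, where `α'` has the block
`{i, j'}` instead (`ebar_mul_join`).  When no singletons are left, `α` is a permutation, hence a
product of the `s̄_i`.  The elements `t̄_ij` are conjugates of `q̄_1` by permutations.

All these products are computed by `mul_eq_of_proj`, which replaces connectivity in the product
graph by a projection of the graph onto its outer rows.  Associativity of the product is never
needed, because the set of generated elements is closed under arbitrary products. -/


namespace RookPaper

/-- Reflexive–symmetric–transitive closure of a relation
(connectivity by paths in a graph). -/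
inductive RClosure {V : Type*} (E : V → V → Prop) : V → V → Prop
  | base {x y : V} : E x y → RClosure E x y
  | refl (x : V) : RClosure E x x
  | symm {x y : V} : RClosure E x y → RClosure E y x
  | trans {x y z : V} : RClosure E x y → RClosure E y z → RClosure E x z

/-- The 2n points `1,…,n` (`Sum.inl`) and `1',…,n'` (`Sum.inr`). -/
abbrev Pt (n : ℕ) := Fin n ⊕ Fin n

/-- A rook partition of degree `n`, encoded as a partial equivalence relation on the
`2n` points: its blocks are the equivalence classes of `rel`, and the rook dots are the
points `x` with `¬ rel x x`. -/
structure RP (n : ℕ) where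
  rel : Pt n → Pt n → Prop
  symm : ∀ {x y : Pt n}, rel x y → rel y x
  trans : ∀ {x y z : Pt n}, rel x y → rel y z → rel x z

/-- The underlying index in `[n]` of a point (`i` and `i'` both have index `i`). -/
def idx {n : ℕ} : Pt n → Fin n := Sum.elim id id

/-- For `A ⊆ [n]`, the corresponding set of upper points. -/
def upSet {n : ℕ} (A : Set (Fin n)) : Set (Pt n) := Sum.inl '' A

/-- For `B ⊆ [n]`, the set `B' = {b' : b ∈ B}` of lower points. -/
def dnSet {n : ℕ} (B : Set (Fin n)) : Set (Pt n) := Sum.inr '' B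

/-- `x` is a rook dot of `α`. -/
def RP.IsRookDot {n : ℕ} (α : RP n) (x : Pt n) : Prop := ¬ α.rel x x

/-- `α` has no rook dots, i.e. `α` lies in the partition monoid `P_n`. -/
def RP.NoDots {n : ℕ} (α : RP n) : Prop := ∀ x, α.rel x x

/-- `B` is a block of `α`. -/
def RP.IsBlock {n : ℕ} (α : RP n) (B : Set (Pt n)) : Prop :=
  ∃ x, α.rel x x ∧ B = {y | α.rel x y}

/-- The identity rook partition, with blocks `{i,i'}`. -/
instance {n : ℕ} : One (RP n) :=
  ⟨{ rel := fun x y => idx x = idx y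
     symm := fun h => Eq.symm h
     trans := fun h h' => Eq.trans h h' }⟩

/-! The product graph `Γ(α,β)` lives on three rows of `n` vertices. -/

abbrev V3 (n : ℕ) := Fin n ⊕ Pt n

def vTop {n : ℕ} (i : Fin n) : V3 n := Sum.inl i
def vMid {n : ℕ} (i : Fin n) : V3 n := Sum.inr (Sum.inl i)
def vBot {n : ℕ} (i : Fin n) : V3 n := Sum.inr (Sum.inr i)

/-- `α` occupies the top and middle rows. -/
def embA {n : ℕ} : Pt n → V3 n := Sum.elim vTop vMid
/-- `β` occupies the middle and bottom rows. -/
def embB {n : ℕ} : Pt n → V3 n := Sum.elim vMid vBot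
/-- The product `αβ` lives on the top and bottom rows. -/
def embOut {n : ℕ} : Pt n → V3 n := Sum.elim vTop vBot

/-- The edges of the product graph `Γ(α,β)`. -/
def pgEdge {n : ℕ} (α β : RP n) (x y : V3 n) : Prop :=
  (∃ a b : Pt n, α.rel a b ∧ x = embA a ∧ y = embA b) ∨
  (∃ a b : Pt n, β.rel a b ∧ x = embB a ∧ y = embB b)

/-- Connectivity (by a possibly empty path) in the product graph `Γ(α,β)`. -/
def pgConn {n : ℕ} (α β : RP n) : V3 n → V3 n → Prop :=
  RClosure (pgEdge α β)

/-- The white vertices of `Γ(α,β)`: a top vertex is white if it is a rook dot of `α`,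
a bottom vertex is white if it is a rook dot of `β`, and a middle vertex is white if it is
a rook dot of `α` (as a lower point) or of `β` (as an upper point). -/
def pgWhite {n : ℕ} (α β : RP n) (v : V3 n) : Prop :=
  (∃ i, v = vTop i ∧ ¬ α.rel (Sum.inl i) (Sum.inl i)) ∨
  (∃ i, v = vMid i ∧ (¬ α.rel (Sum.inr i) (Sum.inr i) ∨ ¬ β.rel (Sum.inl i) (Sum.inl i))) ∨
  (∃ i, v = vBot i ∧ ¬ β.rel (Sum.inr i) (Sum.inr i))

/-- The product of two rook partitions: a point of `αβ` is a rook dot iff it is connected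
to a white vertex of `Γ(α,β)`, and two points are in the same block of `αβ` iff they are
connected in `Γ(α,β)` (and are not rook dots). -/
instance {n : ℕ} : Mul (RP n) :=
  ⟨fun α β =>
    { rel := fun x y =>
        pgConn α β (embOut x) (embOut y) ∧
          ∀ w, pgWhite α β w → ¬ pgConn α β (embOut x) w
      symm := by
        intro x y h
        exact ⟨RClosure.symm h.1, fun w hw hc => h.2 w hw (RClosure.trans h.1 hc)⟩
      trans := by
        intro x y z h h'
        exact ⟨RClosure.trans h.1 h'.1, h.2⟩ }⟩

/-- The rook partition corresponding to a permutation `σ`: blocks `{i, (σ i)'}`. -/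
def permRP {n : ℕ} (σ : Equiv.Perm (Fin n)) : RP n where
  rel x y := Sum.elim (fun i => σ i) (fun i => i) x = Sum.elim (fun i => σ i) (fun i => i) y
  symm := fun h => Eq.symm h
  trans := fun h h' => Eq.trans h h'

/-- `α` lies in the copy of the symmetric group `S_n` inside `RP_n`. -/
def RP.IsPermDiag {n : ℕ} (α : RP n) : Prop := ∃ σ : Equiv.Perm (Fin n), α = permRP σ

/-- The generator `ē_i` : blocks `{j,j'}` for `j ≠ i`, and singleton blocks `{i}`, `{i'}`. -/
def ebar {n : ℕ} (i : Fin n) : RP n where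
  rel x y := x = y ∨ (idx x = idx y ∧ idx x ≠ i)
  symm := by
    rintro x y (rfl | ⟨h1, h2⟩)
    · exact Or.inl rfl
    · exact Or.inr ⟨h1.symm, h1 ▸ h2⟩
  trans := by
    rintro x y z (rfl | ⟨h1, h2⟩) h
    · exact h
    · rcases h with rfl | ⟨h3, h4⟩
      · exact Or.inr ⟨h1, h2⟩
      · exact Or.inr ⟨h1.trans h3, h2⟩

/-- The generator `t̄_ij` (for `i ≠ j`): blocks `{k,k'}` for `k ∉ {i,j}`, and `{i,j,i',j'}`. -/
def tbar {n : ℕ} (i j : Fin n) : RP n where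
  rel x y := idx x = idx y ∨ ((idx x = i ∨ idx x = j) ∧ (idx y = i ∨ idx y = j))
  symm := by
    rintro x y (h | ⟨h1, h2⟩)
    · exact Or.inl h.symm
    · exact Or.inr ⟨h2, h1⟩
  trans := by
    rintro x y z hxy hyz
    rcases hxy with h | ⟨h1, h2⟩
    · rcases hyz with h' | ⟨h3, h4⟩
      · exact Or.inl (h.trans h')
      · refine Or.inr ⟨?_, h4⟩
        rw [h]; exact h3
    · rcases hyz with h' | ⟨h3, h4⟩
      · refine Or.inr ⟨h1, ?_⟩
        rw [← h']; exact h2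
      · exact Or.inr ⟨h1, h4⟩

/-- `ō_A` for a subset `A ⊆ [n]`: rook dots at all points of `A ∪ A'`, blocks `{j,j'}` for
`j ∉ A`. -/
def obarS {n : ℕ} (A : Set (Fin n)) : RP n where
  rel x y := idx x = idx y ∧ idx x ∉ A
  symm := by
    rintro x y ⟨h1, h2⟩
    exact ⟨h1.symm, h1 ▸ h2⟩
  trans := by
    rintro x y z ⟨h1, h2⟩ ⟨h3, h4⟩
    exact ⟨h1.trans h3, h2⟩

/-- The generator `ō_i`: rook dots `i` and `i'`, blocks `{j,j'}` for `j ≠ i`. -/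
def obar {n : ℕ} (i : Fin n) : RP n := obarS {i}

/-- For an index `i` of a simple transposition (`1 ≤ i ≤ n-1`, zero-based `Fin (n-1)`),
the smaller of the two swapped points. -/
def lo {n : ℕ} (i : Fin (n - 1)) : Fin n := ⟨i.val, by have := i.isLt; omega⟩
/-- The larger of the two swapped points. -/
def hi {n : ℕ} (i : Fin (n - 1)) : Fin n := ⟨i.val + 1, by have := i.isLt; omega⟩

/-- The generator `s̄_i`: the simple transposition with blocks `{i,(i+1)'}`, `{i+1,i'}`,
and `{j,j'}` for other `j`. -/
def sbar {n : ℕ} (i : Fin (n - 1)) : RP n := permRP (Equiv.swap (lo i) (hi i))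

/-- The generator `q̄_i = t̄_{i,i+1}`. -/
def qbar {n : ℕ} (i : Fin (n - 1)) : RP n := tbar (lo i) (hi i)

/-- Membership in the subsemigroup generated by a subset `X`. -/
inductive SgGen {M : Type*} [Mul M] (X : Set M) : M → Prop
  | incl {x : M} : x ∈ X → SgGen X x
  | mul {a b : M} : SgGen X a → SgGen X b → SgGen X (a * b)

/-- Membership in the submonoid generated by a subset `X`. -/
inductive MonGen {M : Type*} [Mul M] [One M] (X : Set M) : M → Prop
  | one : MonGen X 1
  | incl {x : M} : x ∈ X → MonGen X x
  | mul {a b : M} : MonGen X a → MonGen X b → MonGen X (a * b)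

/-- Evaluation of a word under a map on the letters (the product, in order, of the images
of the letters; the empty word evaluates to `1`). -/
def evalWord {X M : Type*} [Mul M] [One M] (f : X → M) : List X → M
  | [] => 1
  | [x] => f x
  | x :: y :: w => f x * evalWord f (y :: w)

/-- The congruence on the free monoid of words (with product = concatenation) generated
by a set of pairs `R`.  Restricted to nonempty words it is the congruence on the free
semigroup generated by `R`. -/
inductive CongGen {X : Type*} (R : List X → List X → Prop) : List X → List X → Prop
  | rel {u v : List X} : R u v → CongGen R u v
  | refl (u : List X) : CongGen R u u
  | symm {u v : List X} : CongGen R u v → CongGen R v u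
  | trans {u v w : List X} : CongGen R u v → CongGen R v w → CongGen R u w
  | mul {u v u' v' : List X} : CongGen R u v → CongGen R u' v' → CongGen R (u ++ u') (v ++ v')


theorem RP.eq_of_rel {n : ℕ} {α β : RP n} (h : ∀ x y, α.rel x y ↔ β.rel x y) : α = β := by
  obtain ⟨r, _, _⟩ := α
  obtain ⟨s, _, _⟩ := β
  have : r = s := by
    funext x y
    exact propext (h x y)
  subst this
  rfl

/-- The generating set of the theorem. -/
abbrev gens (n : ℕ) : Set (RP n) :=
  Set.range sbar ∪ Set.range ebar ∪ Set.range qbar ∪ Set.range obar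

/-! ### Computing products -/

/-- The projection of the product graph onto the `2n` outer points that fixes the outer rows
and sends the middle vertex `k` to `m k`. -/
def proj {n : ℕ} (m : Fin n → Pt n) : V3 n → Pt n :=
  Sum.elim Sum.inl (Sum.elim m Sum.inr)

/-- A criterion for `δβ = α`.  Projecting the product graph to the outer points along `m`
must turn edges into equalities or relations of `α`, and white vertices into rook dots of `α`;
conversely every relation of `α` must be realised by a path, and every rook dot of `α` must
reach a white vertex. -/
theorem mul_eq_of_proj {n : ℕ} {δ β α : RP n} (m : Fin n → Pt n)
    (hA : ∀ a b, δ.rel a b → proj m (embA a) = proj m (embA b) ∨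
      α.rel (proj m (embA a)) (proj m (embA b)))
    (hB : ∀ a b, β.rel a b → proj m (embB a) = proj m (embB b) ∨
      α.rel (proj m (embB a)) (proj m (embB b)))
    (hW : ∀ w, pgWhite δ β w → ¬ α.rel (proj m w) (proj m w))
    (hC : ∀ x y, α.rel x y → pgConn δ β (embOut x) (embOut y))
    (hD : ∀ x, ¬ α.rel x x → ∃ w, pgWhite δ β w ∧ pgConn δ β (embOut x) w) :
    δ * β = α := by
  have key : ∀ v w, pgConn δ β v w →
      proj m v = proj m w ∨ α.rel (proj m v) (proj m w) := by
    intro v w h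
    induction h with
    | base h =>
      rcases h with ⟨a, b, h, rfl, rfl⟩ | ⟨a, b, h, rfl, rfl⟩
      · exact hA a b h
      · exact hB a b h
    | refl => exact Or.inl rfl
    | symm _ ih => exact ih.imp Eq.symm α.symm
    | trans _ _ ih1 ih2 =>
      rcases ih1 with h1 | h1
      · rw [h1]; exact ih2
      · rcases ih2 with h2 | h2
        · rw [← h2]; exact Or.inr h1
        · exact Or.inr (α.trans h1 h2)
  have hout : ∀ x : Pt n, proj m (embOut x) = x := by rintro (x | x) <;> rfl
  refine RP.eq_of_rel fun x y => ⟨?_, ?_⟩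
  · rintro ⟨hc, hw⟩
    have h := key _ _ hc
    rw [hout, hout] at h
    rcases h with rfl | h
    · by_contra hx
      obtain ⟨w, hw1, hw2⟩ := hD x hx
      exact hw w hw1 hw2
    · exact h
  · intro h
    refine ⟨hC x y h, fun w hw hc => hW w hw ?_⟩
    have h' := key _ _ hc
    rw [hout] at h'
    rcases h' with h' | h'
    · rw [← h']; exact α.trans h (α.symm h)
    · exact α.trans (α.symm h') h'

theorem conn_left {n : ℕ} {δ β : RP n} {a b : Pt n} (h : δ.rel a b) :
    pgConn δ β (embA a) (embA b) := RClosure.base (Or.inl ⟨a, b, h, rfl, rfl⟩)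

theorem conn_right {n : ℕ} {δ β : RP n} {a b : Pt n} (h : β.rel a b) :
    pgConn δ β (embB a) (embB b) := RClosure.base (Or.inr ⟨a, b, h, rfl, rfl⟩)

/-! ### Reflection in the horizontal axis -/

/-- The reflection `α*` of `α`, interchanging `i` and `i'`. -/
def flip {n : ℕ} (α : RP n) : RP n where
  rel x y := α.rel x.swap y.swap
  symm := fun h => α.symm h
  trans := fun h h' => α.trans h h'

theorem flip_flip {n : ℕ} (α : RP n) : flip (flip α) = α := by
  refine RP.eq_of_rel fun x y => ?_
  simp [flip]

/-- The reflection of the product graph, interchanging the top and bottom rows. -/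
def flipV {n : ℕ} : V3 n → V3 n := Sum.elim vBot (Sum.elim vMid vTop)

theorem flipV_flipV {n : ℕ} (v : V3 n) : flipV (flipV v) = v := by
  rcases v with v | v | v <;> rfl

theorem flipV_embA {n : ℕ} (a : Pt n) : flipV (embA a) = embB a.swap := by
  rcases a with a | a <;> rfl

theorem flipV_embB {n : ℕ} (a : Pt n) : flipV (embB a) = embA a.swap := by
  rcases a with a | a <;> rfl

theorem flipV_embOut {n : ℕ} (a : Pt n) : flipV (embOut a) = embOut a.swap := by
  rcases a with a | a <;> rfl

theorem pgConn_flip {n : ℕ} {α β : RP n} {v w : V3 n} (h : pgConn α β v w) :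
    pgConn (flip β) (flip α) (flipV v) (flipV w) := by
  induction h with
  | base h =>
    rcases h with ⟨a, b, h, rfl, rfl⟩ | ⟨a, b, h, rfl, rfl⟩
    · rw [flipV_embA, flipV_embA]
      exact conn_right (by simpa [flip] using h)
    · rw [flipV_embB, flipV_embB]
      exact conn_left (by simpa [flip] using h)
  | refl => exact RClosure.refl _
  | symm _ ih => exact RClosure.symm ih
  | trans _ _ ih1 ih2 => exact RClosure.trans ih1 ih2

theorem pgWhite_flip {n : ℕ} {α β : RP n} {v : V3 n} (h : pgWhite α β v) :
    pgWhite (flip β) (flip α) (flipV v) := by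
  rcases h with ⟨i, rfl, h⟩ | ⟨i, rfl, h⟩ | ⟨i, rfl, h⟩
  · exact Or.inr (Or.inr ⟨i, rfl, h⟩)
  · exact Or.inr (Or.inl ⟨i, rfl, h.symm⟩)
  · exact Or.inl ⟨i, rfl, h⟩

theorem mul_rel_flip {n : ℕ} {α β : RP n} {x y : Pt n} (h : (α * β).rel x y) :
    (flip β * flip α).rel x.swap y.swap := by
  refine ⟨?_, fun w hw hc => h.2 (flipV w) ?_ ?_⟩
  · rw [← flipV_embOut, ← flipV_embOut]
    exact pgConn_flip h.1
  · simpa only [flip_flip] using pgWhite_flip hw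
  · have := pgConn_flip hc
    rwa [flip_flip, flip_flip, flipV_embOut, Sum.swap_swap] at this

theorem flip_mul {n : ℕ} (α β : RP n) : flip (α * β) = flip β * flip α := by
  refine RP.eq_of_rel fun x y => ⟨fun h => ?_, fun h => ?_⟩
  · simpa using mul_rel_flip h
  · have h' := mul_rel_flip h
    rw [flip_flip, flip_flip] at h'
    exact h'

theorem flip_permRP {n : ℕ} (σ : Equiv.Perm (Fin n)) : flip (permRP σ) = permRP σ⁻¹ := by
  refine RP.eq_of_rel ?_
  rintro (x | x) (y | y) <;> simp [flip, permRP, Equiv.eq_symm_apply, Equiv.symm_apply_eq]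

theorem idx_swap {n : ℕ} (x : Pt n) : idx x.swap = idx x := by
  rcases x with x | x <;> rfl

theorem gen_flip {n : ℕ} {α : RP n} (h : MonGen (gens n) α) : MonGen (gens n) (flip α) := by
  induction h with
  | one =>
    have : flip (1 : RP n) = 1 := RP.eq_of_rel fun x y => by
      change idx x.swap = idx y.swap ↔ idx x = idx y
      rw [idx_swap, idx_swap]
    rw [this]; exact MonGen.one
  | @incl x h =>
    have : flip x = x := by
      rcases h with ((⟨i, rfl⟩ | ⟨i, rfl⟩) | ⟨i, rfl⟩) | ⟨i, rfl⟩
      · rw [sbar, flip_permRP, Equiv.swap_inv]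
      all_goals
        refine RP.eq_of_rel fun x y => ?_
        have hs : x.swap = y.swap ↔ x = y := Sum.swap_leftInverse.injective.eq_iff
        simp [flip, ebar, qbar, tbar, obar, obarS, idx_swap, hs]
    rw [this]; exact MonGen.incl h
  | mul _ _ ih1 ih2 => rw [flip_mul]; exact MonGen.mul ih2 ih1

/-! ### Permutations and general merging elements -/

/-- The rook partition obtained from `β` by relabelling the upper points along `σ`. -/
def relabel {n : ℕ} (σ : Equiv.Perm (Fin n)) (β : RP n) : RP n where
  rel x y := β.rel (x.map σ id) (y.map σ id)
  symm := fun h => β.symm h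
  trans := fun h h' => β.trans h h'

theorem permRP_mul {n : ℕ} (σ : Equiv.Perm (Fin n)) (β : RP n) :
    permRP σ * β = relabel σ β := by
  have hp : ∀ a : Pt n, (proj (fun k => Sum.inl (σ⁻¹ k)) (embB a)).map σ id = a := by
    rintro (a | a) <;> simp [proj, embB, vMid, vBot]
  have hc : ∀ x : Pt n, pgConn (permRP σ) β (embOut x) (embB (x.map σ id)) := by
    rintro (k | k)
    · exact conn_left (a := Sum.inl k) (b := Sum.inr (σ k)) rfl
    · exact RClosure.refl _
  refine mul_eq_of_proj (fun k => Sum.inl (σ⁻¹ k)) ?_ ?_ ?_ ?_ ?_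
  · rintro (a | a) (b | b) h <;> left <;>
      simp_all [permRP, proj, embA, vTop, vMid, Equiv.eq_symm_apply]
  · intro a b h
    right
    change β.rel _ _
    rw [hp, hp]; exact h
  · rintro w (⟨i, rfl, h⟩ | ⟨i, rfl, h⟩ | ⟨i, rfl, h⟩) h'
    · exact h rfl
    · rcases h with h | h
      · exact h rfl
      · change β.rel _ _ at h'
        have := hp (Sum.inl i)
        change Sum.map _ _ (proj _ (vMid i)) = _ at this
        rw [this] at h'
        exact h h'
    · exact h h'
  · intro x y h
    exact RClosure.trans (hc x) (RClosure.trans (conn_right h) (RClosure.symm (hc y)))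
  · intro x h
    refine ⟨_, ?_, hc x⟩
    rcases x with k | k
    · exact Or.inr (Or.inl ⟨σ k, rfl, Or.inr h⟩)
    · exact Or.inr (Or.inr ⟨k, rfl, h⟩)

theorem gen_permRP {n : ℕ} (hn : 1 ≤ n) (σ : Equiv.Perm (Fin n)) :
    MonGen (gens n) (permRP σ) := by
  obtain ⟨m, rfl⟩ : ∃ m, n = m + 1 := ⟨n - 1, by omega⟩
  have hσ : σ ∈ Submonoid.closure
      (Set.range fun i : Fin m => Equiv.swap i.castSucc i.succ) := by
    rw [Equiv.Perm.mclosure_swap_castSucc_succ]; trivial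
  induction hσ using Submonoid.closure_induction with
  | mem x hx =>
    obtain ⟨i, rfl⟩ := hx
    exact MonGen.incl (Or.inl (Or.inl (Or.inl ⟨i, rfl⟩)))
  | one =>
    have : permRP (1 : Equiv.Perm (Fin (m + 1))) = 1 := RP.eq_of_rel fun x y => Iff.rfl
    rw [this]; exact MonGen.one
  | mul x y _ _ ihx ihy =>
    have : permRP (x * y) = permRP y * permRP x := by
      rw [permRP_mul]
      refine RP.eq_of_rel ?_
      rintro (a | a) (b | b) <;> rfl
    rw [this]; exact MonGen.mul ihy ihx

theorem gen_tbar {n : ℕ} (hn : 1 ≤ n) {i j : Fin n} (hij : i ≠ j) :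
    MonGen (gens n) (tbar i j) := by
  have h2 : 0 < n - 1 := by
    have := i.isLt
    have := j.isLt
    have : i.val ≠ j.val := fun h => hij (Fin.ext h)
    omega
  let z : Fin (n - 1) := ⟨0, h2⟩
  have hz : lo z ≠ hi z := fun h => by simpa [lo, hi, z] using congrArg Fin.val h
  -- a permutation carrying `i, j` to the adjacent pair `lo z, hi z`
  obtain ⟨σ, hσi, hσj⟩ : ∃ σ : Equiv.Perm (Fin n), σ i = lo z ∧ σ j = hi z := by
    refine ⟨Equiv.swap (Equiv.swap i (lo z) j) (hi z) * Equiv.swap i (lo z), ?_, ?_⟩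
    · rw [Equiv.Perm.mul_apply, Equiv.swap_apply_left]
      refine Equiv.swap_apply_of_ne_of_ne (fun h => hij ?_) hz
      apply (Equiv.swap i (lo z)).injective
      rw [Equiv.swap_apply_left]; exact h
    · rw [Equiv.Perm.mul_apply, Equiv.swap_apply_left]
  have hq : MonGen (gens n) (qbar z) := MonGen.incl (Or.inl (Or.inr ⟨z, rfl⟩))
  have h := gen_flip (MonGen.mul (gen_permRP hn σ)
    (gen_flip (MonGen.mul (gen_permRP hn σ) hq)))
  have e : flip (permRP σ * flip (permRP σ * qbar z)) = tbar i j := by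
    rw [permRP_mul, permRP_mul]
    refine RP.eq_of_rel ?_
    rintro (a | a) (b | b) <;>
      simp [flip, relabel, qbar, tbar, idx, ← hσi, ← hσj]
  rwa [e] at h

/-! ### Reducing to permutations -/

/-- `α` with the upper point `i` removed from its block and turned into a singleton block. -/
def iso {n : ℕ} (i : Fin n) (α : RP n) : RP n where
  rel x y := (x = Sum.inl i ∧ y = Sum.inl i) ∨
    (x ≠ Sum.inl i ∧ y ≠ Sum.inl i ∧ α.rel x y)
  symm := by
    rintro x y (⟨h1, h2⟩ | ⟨h1, h2, h3⟩)
    · exact Or.inl ⟨h2, h1⟩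
    · exact Or.inr ⟨h2, h1, α.symm h3⟩
  trans := by
    rintro x y z (⟨h1, h2⟩ | ⟨h1, h2, h3⟩) (⟨h4, h5⟩ | ⟨h4, h5, h6⟩)
    · exact Or.inl ⟨h1, h5⟩
    · exact absurd h2 h4
    · exact absurd h4 h2
    · exact Or.inr ⟨h1, h5, α.trans h3 h6⟩

theorem tbar_mul_iso {n : ℕ} {α : RP n} {i j : Fin n} (hij : i ≠ j)
    (h : α.rel (Sum.inl i) (Sum.inl j)) : tbar i j * iso i α = α := by
  have hp : ∀ a : Pt n, proj Sum.inl (embB a) = a := by rintro (a | a) <;> rfl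
  have hq : ∀ a : Pt n, proj Sum.inl (embA a) = Sum.inl (idx a) := by rintro (a | a) <;> rfl
  have hi : α.rel (Sum.inl i) (Sum.inl i) := α.trans h (α.symm h)
  have hj : α.rel (Sum.inl j) (Sum.inl j) := α.trans (α.symm h) h
  have hd : ∀ x, ¬ (iso i α).rel x x ↔ ¬ α.rel x x := by
    intro x
    by_cases hx : x = Sum.inl i
    · subst hx; simp [iso, hi]
    · simp [iso, hx]
  have hc : ∀ x : Pt n, pgConn (tbar i j) (iso i α) (embOut x) (embB x) := by
    rintro (k | k)
    · exact conn_left (a := Sum.inl k) (b := Sum.inr k) (Or.inl rfl)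
    · exact RClosure.refl _
  -- every non-dot of `α` reaches a point of its block other than `inl i`
  have hr : ∀ x, α.rel x x → ∃ x', x' ≠ Sum.inl i ∧ α.rel x x' ∧
      pgConn (tbar i j) (iso i α) (embOut x) (embB x') := by
    intro x hx
    by_cases hxi : x = Sum.inl i
    · subst hxi
      refine ⟨Sum.inl j, by simpa using hij.symm, h, ?_⟩
      exact conn_left (a := Sum.inl i) (b := Sum.inr j) (Or.inr ⟨Or.inl rfl, Or.inr rfl⟩)
    · exact ⟨x, hxi, hx, hc x⟩
  refine mul_eq_of_proj Sum.inl ?_ ?_ ?_ ?_ ?_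
  · intro a b hab
    rw [hq, hq]
    rcases hab with hab | ⟨ha | ha, hb | hb⟩
    · left; rw [hab]
    · left; rw [ha, hb]
    · right; rw [ha, hb]; exact h
    · right; rw [ha, hb]; exact α.symm h
    · left; rw [ha, hb]
  · intro a b hab
    rw [hp, hp]
    rcases hab with ⟨ha, hb⟩ | ⟨_, _, hab⟩
    · left; rw [ha, hb]
    · exact Or.inr hab
  · rintro w (⟨k, rfl, hk⟩ | ⟨k, rfl, hk⟩ | ⟨k, rfl, hk⟩)
    · exact absurd (Or.inl rfl) hk
    · rcases hk with hk | hk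
      · exact absurd (Or.inl rfl) hk
      · exact (hd _).1 hk
    · exact (hd _).1 hk
  · intro x y hxy
    obtain ⟨x', hx1, hx2, hx3⟩ := hr x (α.trans hxy (α.symm hxy))
    obtain ⟨y', hy1, hy2, hy3⟩ := hr y (α.trans (α.symm hxy) hxy)
    have : (iso i α).rel x' y' :=
      Or.inr ⟨hx1, hy1, α.trans (α.symm hx2) (α.trans hxy hy2)⟩
    exact RClosure.trans hx3 (RClosure.trans (conn_right this) (RClosure.symm hy3))
  · intro x hx
    refine ⟨_, ?_, hc x⟩
    rcases x with k | k
    · exact Or.inr (Or.inl ⟨k, rfl, Or.inr ((hd _).2 hx)⟩)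
    · exact Or.inr (Or.inr ⟨k, rfl, (hd _).2 hx⟩)

theorem obar_mul_iso {n : ℕ} {α : RP n} {i : Fin n}
    (h : ¬ α.rel (Sum.inl i) (Sum.inl i)) : obar i * iso i α = α := by
  have hp : ∀ a : Pt n, proj Sum.inl (embB a) = a := by rintro (a | a) <;> rfl
  have hq : ∀ a : Pt n, proj Sum.inl (embA a) = Sum.inl (idx a) := by rintro (a | a) <;> rfl
  have hc : ∀ x : Pt n, x ≠ Sum.inl i →
      pgConn (obar i) (iso i α) (embOut x) (embB x) := by
    rintro (k | k) hk
    · exact conn_left (a := Sum.inl k) (b := Sum.inr k) ⟨rfl, fun e => hk (congrArg _ e)⟩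
    · exact RClosure.refl _
  have hd : ∀ x, ¬ (iso i α).rel x x → ¬ α.rel x x := by
    intro x hx hx'
    by_cases hxi : x = Sum.inl i
    · subst hxi; exact h hx'
    · exact hx (Or.inr ⟨hxi, hxi, hx'⟩)
  have ho : ∀ k : Fin n, ¬ (k = k ∧ k ∉ ({i} : Set (Fin n))) → k = i := by
    intro k hk
    by_contra hki
    exact hk ⟨rfl, hki⟩
  refine mul_eq_of_proj Sum.inl ?_ ?_ ?_ ?_ ?_
  · intro a b hab
    rw [hq, hq, hab.1]
    exact Or.inl rfl
  · intro a b hab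
    rw [hp, hp]
    rcases hab with ⟨ha, hb⟩ | ⟨_, _, hab⟩
    · left; rw [ha, hb]
    · exact Or.inr hab
  · rintro w (⟨k, rfl, hk⟩ | ⟨k, rfl, hk⟩ | ⟨k, rfl, hk⟩)
    · rw [ho k hk]; exact h
    · rcases hk with hk | hk
      · rw [ho k hk]; exact h
      · exact hd _ hk
    · exact hd _ hk
  · intro x y hxy
    have hx : x ≠ Sum.inl i := by
      rintro rfl
      exact h (α.trans hxy (α.symm hxy))
    have hy : y ≠ Sum.inl i := by
      rintro rfl
      exact h (α.trans (α.symm hxy) hxy)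
    exact RClosure.trans (hc x hx) (RClosure.trans
      (conn_right (Or.inr ⟨hx, hy, hxy⟩)) (RClosure.symm (hc y hy)))
  · intro x hx
    by_cases hxi : x = Sum.inl i
    · subst hxi
      exact ⟨_, Or.inl ⟨i, rfl, fun e => e.2 rfl⟩, RClosure.refl _⟩
    · have hx' : ¬ (iso i α).rel x x := by
        rintro (⟨e, _⟩ | ⟨_, _, e⟩)
        · exact hxi e
        · exact hx e
      refine ⟨_, ?_, hc x hxi⟩
      rcases x with k | k
      · exact Or.inr (Or.inl ⟨k, rfl, Or.inr hx'⟩)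
      · exact Or.inr (Or.inr ⟨k, rfl, hx'⟩)

/-- No upper point of `α` is a rook dot, and upper points lie in distinct blocks. -/
def TopFree {n : ℕ} (α : RP n) : Prop :=
  ∀ i j : Fin n, α.rel (Sum.inl i) (Sum.inl j) ↔ i = j

/-- The upper points of `α` that do not form singleton blocks. -/
def unisolated {n : ℕ} (α : RP n) : Set (Fin n) :=
  {i | ¬ ∀ y, α.rel (Sum.inl i) y ↔ y = Sum.inl i}

theorem unisolated_iso {n : ℕ} {α : RP n} {i : Fin n} (h : i ∈ unisolated α) :
    (unisolated (iso i α)).ncard < (unisolated α).ncard := by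
  refine Set.ncard_lt_ncard ⟨?_, fun hs => ?_⟩ (Set.toFinite _)
  · intro k hk hk'
    refine hk fun y => ?_
    by_cases hki : k = i
    · subst hki; simp [iso]
    · have : (Sum.inl k : Pt n) ≠ Sum.inl i := fun e => hki (Sum.inl.inj e)
      simp only [iso, this, false_and, false_or, hk', ne_eq, not_false_eq_true, true_and]
      constructor
      · exact fun e => e.2
      · rintro rfl
        exact ⟨this, rfl⟩
  · refine hs h fun y => ?_
    simp [iso]

/-- It suffices to generate the elements with free top row, within any class `K` of rook
partitions that is stable under isolating upper points. -/
theorem gen_of_topFree {n : ℕ} (hn : 1 ≤ n) (K : RP n → Prop)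
    (hK : ∀ α i, K α → K (iso i α))
    (H : ∀ α, K α → TopFree α → MonGen (gens n) α) (α : RP n) (hα : K α) :
    MonGen (gens n) α := by
  induction hc : (unisolated α).ncard using Nat.strong_induction_on generalizing α with
  | _ c ih =>
    subst hc
    by_cases hd : ∃ i, ¬ α.rel (Sum.inl i) (Sum.inl i)
    · obtain ⟨i, hi⟩ := hd
      rw [← obar_mul_iso hi]
      exact MonGen.mul (MonGen.incl (Or.inr ⟨i, rfl⟩))
        (ih _ (unisolated_iso fun h => hi ((h _).2 rfl)) _ (hK _ _ hα) rfl)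
    · by_cases hm : ∃ i j, i ≠ j ∧ α.rel (Sum.inl i) (Sum.inl j)
      · obtain ⟨i, j, hij, h⟩ := hm
        rw [← tbar_mul_iso hij h]
        exact MonGen.mul (gen_tbar hn hij)
          (ih _ (unisolated_iso fun h' => hij (Sum.inl.inj ((h' _).1 h)).symm) _
            (hK _ _ hα) rfl)
      · push Not at hd hm
        refine H α hα fun i j => ⟨fun h => ?_, ?_⟩
        · by_contra hij
          exact hm i j hij h
        · rintro rfl
          exact hd i

/-- `α` with `i` and `j'` joined by an additional block `{i, j'}`; only meaningful when `i`
and `j'` are singleton blocks of `α`, which the hypotheses record. -/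
def join {n : ℕ} (α : RP n) (i j : Fin n)
    (hi : ∀ y, α.rel (Sum.inl i) y ↔ y = Sum.inl i)
    (hj : ∀ y, α.rel (Sum.inr j) y ↔ y = Sum.inr j) : RP n where
  rel x y := α.rel x y ∨
    ((x = Sum.inl i ∨ x = Sum.inr j) ∧ (y = Sum.inl i ∨ y = Sum.inr j))
  symm := by
    rintro x y (h | ⟨h1, h2⟩)
    · exact Or.inl (α.symm h)
    · exact Or.inr ⟨h2, h1⟩
  trans := by
    rintro x y z (h | ⟨h1, h2⟩) (h' | ⟨h3, h4⟩)
    · exact Or.inl (α.trans h h')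
    · rcases h3 with rfl | rfl
      · exact Or.inr ⟨Or.inl ((hi x).1 (α.symm h)), h4⟩
      · exact Or.inr ⟨Or.inr ((hj x).1 (α.symm h)), h4⟩
    · rcases h2 with rfl | rfl
      · exact Or.inr ⟨h1, Or.inl ((hi z).1 h')⟩
      · exact Or.inr ⟨h1, Or.inr ((hj z).1 h')⟩
    · exact Or.inr ⟨h1, h4⟩

theorem ebar_mul_join {n : ℕ} {α : RP n} (hα : ∀ x, α.rel x x) {i j : Fin n}
    (hi : ∀ y, α.rel (Sum.inl i) y ↔ y = Sum.inl i)
    (hj : ∀ y, α.rel (Sum.inr j) y ↔ y = Sum.inr j) :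
    ebar i * join α i j hi hj = α := by
  classical
  -- the middle vertex `i` is attached to `j'` only
  let m : Fin n → Pt n := fun k => if k = i then Sum.inr j else Sum.inl k
  have hm : m i = Sum.inr j := if_pos rfl
  have hm' : ∀ k, k ≠ i → m k = Sum.inl k := fun k hk => if_neg hk
  have hp : ∀ a : Pt n, a ≠ Sum.inl i → proj m (embB a) = a := by
    rintro (a | a) ha
    · exact hm' a fun e => ha (congrArg _ e)
    · rfl
  have hp' : ∀ a : Pt n, a = Sum.inl i ∨ a = Sum.inr j → proj m (embB a) = Sum.inr j := by
    rintro a (rfl | rfl)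
    · exact hm
    · rfl
  have hq : ∀ a : Pt n, idx a ≠ i → proj m (embA a) = Sum.inl (idx a) := by
    rintro (a | a) ha
    · rfl
    · exact hm' a ha
  have hc : ∀ x : Pt n, x ≠ Sum.inl i →
      pgConn (ebar i) (join α i j hi hj) (embOut x) (embB x) := by
    rintro (k | k) hk
    · exact conn_left (a := Sum.inl k) (b := Sum.inr k)
        (Or.inr ⟨rfl, fun e => hk (congrArg Sum.inl e)⟩)
    · exact RClosure.refl _
  refine mul_eq_of_proj m ?_ ?_ ?_ ?_ ?_
  · rintro a b (rfl | ⟨h1, h2⟩)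
    · exact Or.inl rfl
    · rw [hq a h2, hq b (h1 ▸ h2), h1]
      exact Or.inl rfl
  · rintro a b (h | ⟨h1, h2⟩)
    · by_cases ha : a = Sum.inl i
      · subst ha
        rw [(hi b).1 h]
        exact Or.inl rfl
      · by_cases hb : b = Sum.inl i
        · subst hb
          exact absurd ((hi a).1 (α.symm h)) ha
        · rw [hp a ha, hp b hb]
          exact Or.inr h
    · rw [hp' a h1, hp' b h2]
      exact Or.inl rfl
  · rintro w (⟨k, rfl, hk⟩ | ⟨k, rfl, hk | hk⟩ | ⟨k, rfl, hk⟩)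
    · exact absurd (Or.inl rfl) hk
    · exact absurd (Or.inl rfl) hk
    · exact absurd (Or.inl (hα _)) hk
    · exact absurd (Or.inl (hα _)) hk
  · intro x y h
    by_cases hx : x = Sum.inl i
    · subst hx
      rw [(hi y).1 h]
      exact RClosure.refl _
    · by_cases hy : y = Sum.inl i
      · subst hy
        exact absurd ((hi x).1 (α.symm h)) hx
      · exact RClosure.trans (hc x hx) (RClosure.trans (conn_right (Or.inl h))
          (RClosure.symm (hc y hy)))
  · exact fun x hx => absurd (hα x) hx

/-- If the upper row is free and every upper point has a partner in the lower row, choosing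
partners is injective, hence gives a permutation. -/
theorem exists_perm {n : ℕ} {α : RP n} (h1 : TopFree α)
    (h : ∀ i : Fin n, ∃ j : Fin n, α.rel (Sum.inl i) (Sum.inr j)) :
    ∃ σ : Equiv.Perm (Fin n), ∀ i, α.rel (Sum.inl i) (Sum.inr (σ i)) := by
  choose f hf using h
  have hinj : Function.Injective f := by
    intro a b hab
    refine (h1 a b).1 (α.trans (hf a) ?_)
    rw [hab]; exact α.symm (hf b)
  exact ⟨Equiv.ofBijective f (Finite.injective_iff_bijective.1 hinj), hf⟩

theorem exists_partner {n : ℕ} {α : RP n} (h1 : TopFree α) {i : Fin n}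
    (h : i ∈ unisolated α) : ∃ j : Fin n, α.rel (Sum.inl i) (Sum.inr j) := by
  by_contra hj
  push Not at hj
  refine h ?_
  rintro (k | k)
  · rw [h1 i k, Sum.inl.injEq]; exact eq_comm
  · simp [hj k]

theorem gen_of_free {n : ℕ} (hn : 1 ≤ n) (α : RP n) (h1 : TopFree α)
    (h2 : TopFree (flip α)) : MonGen (gens n) α := by
  induction hc : (unisolated α)ᶜ.ncard using Nat.strong_induction_on generalizing α with
  | _ c ih =>
    subst hc
    have hα : ∀ x, α.rel x x := by
      rintro (k | k)
      · exact (h1 k k).2 rfl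
      · exact (h2 k k).2 rfl
    by_cases hall : ∀ i, i ∈ unisolated α
    · obtain ⟨σ, hσ⟩ := exists_perm h1 fun i => exists_partner h1 (hall i)
      have e : α = permRP σ := by
        -- both sides are determined by comparing the lower ends of the blocks
        have hx : ∀ x : Pt n, α.rel x (Sum.inr (Sum.elim (fun i => σ i) (fun i => i) x)) := by
          rintro (k | k)
          · exact hσ k
          · exact hα _
        refine RP.eq_of_rel fun x y => ⟨fun h => ?_, fun h => ?_⟩
        · exact (h2 _ _).1 (α.trans (α.symm (hx x)) (α.trans h (hx y)))
        · refine α.trans (hx x) ?_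
          change Sum.elim _ _ x = Sum.elim _ _ y at h
          rw [h]; exact α.symm (hx y)
      rw [e]; exact gen_permRP hn σ
    · push Not at hall
      obtain ⟨i, hi⟩ := hall
      have hi' : ∀ y, α.rel (Sum.inl i) y ↔ y = Sum.inl i := not_not.1 hi
      -- if every lower point had a partner, so would `i`, by counting
      obtain ⟨j, hj⟩ : ∃ j, j ∉ unisolated (flip α) := by
        by_contra hall'
        push Not at hall'
        obtain ⟨τ, hτ⟩ := exists_perm h2
          fun j => exists_partner h2 (hall' j)
        have := hτ (τ.symm i)
        rw [Equiv.apply_symm_apply] at this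
        have := (hi' _).1 (α.symm this)
        simp at this
      have hj' : ∀ y, α.rel (Sum.inr j) y ↔ y = Sum.inr j := by
        intro y
        have := not_not.1 hj y.swap
        simp only [flip, Sum.swap_inl, Sum.swap_swap] at this
        rw [this]
        rcases y with y | y <;> simp
      rw [← ebar_mul_join hα hi' hj']
      refine MonGen.mul (MonGen.incl (Or.inl (Or.inl (Or.inr ⟨i, rfl⟩))))
        (ih _ ?_ _ ?_ ?_ rfl)
      · refine Set.ncard_lt_ncard ⟨?_, fun hs => ?_⟩ (Set.toFinite _)
        · intro k hk hk'
          have hk := not_not.1 hk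
          refine hk' fun y => ⟨fun h => (hk y).1 (Or.inl h), ?_⟩
          rintro rfl
          exact hα _
        · have := (not_not.1 (hs hi) (Sum.inr j)).1 (Or.inr ⟨Or.inl rfl, Or.inr rfl⟩)
          simp at this
      · intro a b
        simp only [join, h1 a b, Sum.inl.injEq, reduceCtorEq, or_false, or_iff_left_iff_imp]
        rintro ⟨rfl, rfl⟩; rfl
      · intro a b
        have h2' : α.rel (Sum.inr a) (Sum.inr b) ↔ a = b := h2 a b
        simp only [join, flip, Sum.swap_inl, h2', Sum.inr.injEq, reduceCtorEq, false_or,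
          or_iff_left_iff_imp]
        rintro ⟨rfl, rfl⟩; rfl

/-- Isolating upper points does not affect the relations among lower points. -/
theorem topFree_flip_iso {n : ℕ} {α : RP n} (i : Fin n) (h : TopFree (flip α)) :
    TopFree (flip (iso i α)) := by
  intro a b
  have : α.rel (Sum.inr a) (Sum.inr b) ↔ a = b := h a b
  simp [flip, iso, this]

/-- `RP_n` is generated as a monoid by
`{s̄_1,…,s̄_{n-1}} ∪ {ē_1,…,ē_n} ∪ {q̄_1,…,q̄_{n-1}} ∪ {ō_1,…,ō_n}`. -/
theorem stmt13 (n : ℕ) (hn : 1 ≤ n) (α : RP n) :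
    MonGen (Set.range sbar ∪ Set.range ebar ∪ Set.range qbar ∪ Set.range obar :
      Set (RP n)) α := by
  refine gen_of_topFree hn (fun _ => True) (fun _ _ _ => trivial) (fun β _ hβ => ?_) α trivial
  rw [← flip_flip β]
  refine gen_flip (gen_of_topFree hn (fun γ => TopFree (flip γ))
    (fun γ i hγ => topFree_flip_iso i hγ) (fun γ h1 h2 => gen_of_free hn γ h2 h1) (flip β) ?_)
  rwa [flip_flip]

end RookPaper
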